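/- arXiv:solv-int/9907001 — 2 statements merged into one kernel-verified Lean document; each statement's English description precedes it below -/
import Mathlib

section
/- Let w, f, g, φ, ψ : ℝ → ℝ with w, f, φ, ψ differentiable on ℝ, and suppose f(x)·w'(x) = −g(x)·w(x) for all x. Define (n φ)(x) = f(x)φ'(x) + ((f'(x) − g(x))/2)·φ(x). Assume the functions x ↦ w(x)·φ(x)·(n ψ)(x), x ↦ w(x)·(n φ)(x)·ψ(x), and x ↦ f(x)·w(x)·(φ(x)ψ'(x) − φ'(x)ψ(x)) are integrable on ℝ, and that f(x)·w(x)·φ(x)·ψ(x) → 0 as x → ±∞. Then ∫_ℝ w(x)·φ(x)·(n ψ)(x) dx = (1/2)∫_ℝ f(x)·w(x)·(φ(x)ψ'(x) − φ'(x)ψ(x)) dx. In other words, (φ, n ψ)₂ equals the β = 4 skew inner product of φ and ψ taken with respect to the weight f·w. -/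
open MeasureTheory Filter

/-- The Adler–van Moerbeke operator `n = f·(d/dx) + (f' − g)/2` associated to the
weight `w = e^{−2V}` with `2V' = g/f` (equivalently `f·w' = −g·w`). -/
noncomputable def nOp (f g φ : ℝ → ℝ) : ℝ → ℝ :=
  fun x => f x * deriv φ x + ((deriv f x - g x) / 2) * φ x

/-!
The antisymmetric part of `w·φ·nψ` in `(φ, ψ)` is half of `f·w` times the Wronskian of `φ` and `ψ`,
because the zeroth-order term of `n` cancels. Its symmetric part is half of the total derivative
`(f·w·φ·ψ)'`, because `f·w' = −g·w` gives `(f·w)' = (f' − g)·w`. Integrating over `ℝ`, the symmetric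
part contributes only boundary terms.
-/

section

variable {w f g φ ψ : ℝ → ℝ}

theorem mul_nOp_sub_nOp_mul (w f g φ ψ : ℝ → ℝ) (x : ℝ) :
    w x * φ x * nOp f g ψ x - w x * nOp f g φ x * ψ x
      = f x * w x * (φ x * deriv ψ x - deriv φ x * ψ x) := by
  simp only [nOp]
  ring

theorem hasDerivAt_mul_weight {x : ℝ} (hw : DifferentiableAt ℝ w x) (hf : DifferentiableAt ℝ f x)
    (hweight : f x * deriv w x = -(g x * w x)) :
    HasDerivAt (fun y => f y * w y) ((deriv f x - g x) * w x) x :=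
  (hf.hasDerivAt.fun_mul hw.hasDerivAt).congr_deriv <| by linear_combination hweight

theorem hasDerivAt_mul_weight_mul_mul {x : ℝ}
    (hw : DifferentiableAt ℝ w x) (hf : DifferentiableAt ℝ f x)
    (hφ : DifferentiableAt ℝ φ x) (hψ : DifferentiableAt ℝ ψ x)
    (hweight : f x * deriv w x = -(g x * w x)) :
    HasDerivAt (fun y => f y * w y * φ y * ψ y)
      (w x * φ x * nOp f g ψ x + w x * nOp f g φ x * ψ x) x := by
  have hfw := hasDerivAt_mul_weight hw hf hweight
  refine ((hfw.fun_mul hφ.hasDerivAt).fun_mul hψ.hasDerivAt).congr_deriv ?_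
  simp only [nOp]
  ring

theorem integral_mul_nOp_add_integral_nOp_mul {a b : ℝ}
    (hw : Differentiable ℝ w) (hf : Differentiable ℝ f)
    (hφ : Differentiable ℝ φ) (hψ : Differentiable ℝ ψ)
    (hweight : ∀ x, f x * deriv w x = -(g x * w x))
    (hint_right : Integrable (fun x => w x * φ x * nOp f g ψ x))
    (hint_left : Integrable (fun x => w x * nOp f g φ x * ψ x))
    (hbot : Tendsto (fun x => f x * w x * φ x * ψ x) atBot (nhds a))
    (htop : Tendsto (fun x => f x * w x * φ x * ψ x) atTop (nhds b)) :
    (∫ x, w x * φ x * nOp f g ψ x) + ∫ x, w x * nOp f g φ x * ψ x = b - a := by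
  rw [← integral_add hint_right hint_left]
  exact integral_of_hasDerivAt_of_tendsto
    (fun x => hasDerivAt_mul_weight_mul_mul (hw x) (hf x) (hφ x) (hψ x) (hweight x))
    (hint_right.add hint_left) hbot htop

theorem integral_mul_nOp_sub_integral_nOp_mul
    (hint_right : Integrable (fun x => w x * φ x * nOp f g ψ x))
    (hint_left : Integrable (fun x => w x * nOp f g φ x * ψ x)) :
    (∫ x, w x * φ x * nOp f g ψ x) - ∫ x, w x * nOp f g φ x * ψ x
      = ∫ x, f x * w x * (φ x * deriv ψ x - deriv φ x * ψ x) := by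
  simp only [← integral_sub hint_right hint_left, mul_nOp_sub_nOp_mul]

theorem nOp_inner_eq_skew4_general {a b : ℝ}
    (hw : Differentiable ℝ w) (hf : Differentiable ℝ f)
    (hφ : Differentiable ℝ φ) (hψ : Differentiable ℝ ψ)
    (hweight : ∀ x, f x * deriv w x = -(g x * w x))
    (hint_right : Integrable (fun x => w x * φ x * nOp f g ψ x))
    (hint_left : Integrable (fun x => w x * nOp f g φ x * ψ x))
    (hbot : Tendsto (fun x => f x * w x * φ x * ψ x) atBot (nhds a))
    (htop : Tendsto (fun x => f x * w x * φ x * ψ x) atTop (nhds b)) :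
    ∫ x, w x * φ x * nOp f g ψ x
      = (1 / 2) * (∫ x, f x * w x * (φ x * deriv ψ x - deriv φ x * ψ x)) + (b - a) / 2 := by
  have hsymm := integral_mul_nOp_add_integral_nOp_mul hw hf hφ hψ hweight
    hint_right hint_left hbot htop
  have hantisymm := integral_mul_nOp_sub_integral_nOp_mul hint_right hint_left
  linear_combination (hsymm + hantisymm) / 2

end

/-- `(φ, n ψ)₂` equals the β = 4 skew inner product of `φ` and `ψ` with respect to
the weight `f·w`. -/
theorem nOp_inner_eq_skew4 (w f g φ ψ : ℝ → ℝ)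
    (hw : Differentiable ℝ w) (hf : Differentiable ℝ f)
    (hφ : Differentiable ℝ φ) (hψ : Differentiable ℝ ψ)
    (hweight : ∀ x, f x * deriv w x = - (g x * w x))
    (hint1 : Integrable (fun x => w x * φ x * nOp f g ψ x))
    (hint2 : Integrable (fun x => w x * nOp f g φ x * ψ x))
    (hint3 : Integrable (fun x => f x * w x * (φ x * deriv ψ x - deriv φ x * ψ x)))
    (htop : Tendsto (fun x => f x * w x * φ x * ψ x) atTop (nhds 0))
    (hbot : Tendsto (fun x => f x * w x * φ x * ψ x) atBot (nhds 0)) :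
    ∫ x : ℝ, w x * φ x * nOp f g ψ x
      = (1 / 2) * ∫ x : ℝ, f x * w x * (φ x * deriv ψ x - deriv φ x * ψ x) := by
  simpa using nOp_inner_eq_skew4_general hw hf hφ hψ hweight hint1 hint2 hbot htop
end

section
/- For every natural number k and every real x, the monic Hermite polynomials satisfy (1/2)∫_ℝ sgn(x−t)·e^{−t²/2}·p_{2k}(t) dt − (1/(k + 1/2))·(1/2)∫_ℝ sgn(x−t)·e^{−t²/2}·p_{2k+2}(t) dt = (2^{−2k}/(2k+1))·e^{−x²/2}·H_{2k+1}(x). -/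
open MeasureTheory

/-- The physicists' Hermite polynomials. -/
noncomputable def hermiteH : ℕ → ℝ → ℝ
  | 0, _ => 1
  | 1, x => 2 * x
  | (n + 2), x => 2 * x * hermiteH (n + 1) x - 2 * (n + 1) * hermiteH n x

/-- The monic Hermite polynomials `p_k = 2^{−k} H_k`. -/
noncomputable def hermiteP (k : ℕ) (x : ℝ) : ℝ := hermiteH k x / 2 ^ k

/-!
The derivative of `e^{-t²/2} p_{n+1}(t)` is `e^{-t²/2} ((n+1)/2 · p_n(t) - p_{n+2}(t))`, by
`p_{n+1}' = (n+1) p_n` and the three-term recurrence. For `f` vanishing at `±∞` one has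
`∫ sgn(x - t) f'(t) dt = ∫_{t<x} f' - ∫_{t>x} f' = 2 f(x)`. Applied to `f = e^{-t²/2} p_{n+1}` this
is the identity, for indices of either parity.
-/

open Filter Polynomial Set Topology

section SignIntegral

variable {E : Type*} [NormedAddCommGroup E] [NormedSpace ℝ E] {f f' : ℝ → E} {μ : Measure ℝ}

lemma sign_sub_smul_eq_indicator_sub_indicator (f : ℝ → E) (x : ℝ) :
    (fun t ↦ Real.sign (x - t) • f t) = (Iio x).indicator f - (Ioi x).indicator f := by
  ext t
  rcases lt_trichotomy t x with h | rfl | h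
  · simp [Real.sign_of_pos (sub_pos.2 h), h, h.le]
  · simp
  · simp [Real.sign_of_neg (sub_neg.2 h), h, h.le]

lemma integrable_sign_sub_smul (hf : Integrable f μ) (x : ℝ) :
    Integrable (fun t ↦ Real.sign (x - t) • f t) μ := by
  rw [sign_sub_smul_eq_indicator_sub_indicator]
  exact (hf.indicator measurableSet_Iio).sub (hf.indicator measurableSet_Ioi)

lemma integral_sign_sub_smul (hf : Integrable f μ) (x : ℝ) :
    ∫ t, Real.sign (x - t) • f t ∂μ = (∫ t in Iio x, f t ∂μ) - ∫ t in Ioi x, f t ∂μ := by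
  rw [sign_sub_smul_eq_indicator_sub_indicator,
    integral_sub' (hf.indicator measurableSet_Iio) (hf.indicator measurableSet_Ioi),
    integral_indicator measurableSet_Iio, integral_indicator measurableSet_Ioi]

lemma integral_sign_sub_smul_of_hasDerivAt_of_tendsto [CompleteSpace E] {a b : E}
    (hderiv : ∀ t, HasDerivAt f (f' t) t) (hf' : Integrable f')
    (hbot : Tendsto f atBot (𝓝 a)) (htop : Tendsto f atTop (𝓝 b)) (x : ℝ) :
    ∫ t, Real.sign (x - t) • f' t = (f x - a) - (b - f x) := by
  rw [integral_sign_sub_smul hf', ← integral_Iic_eq_integral_Iio,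
    integral_Iic_of_hasDerivAt_of_tendsto' (fun t _ ↦ hderiv t) hf'.integrableOn hbot,
    integral_Ioi_of_hasDerivAt_of_tendsto' (fun t _ ↦ hderiv t) hf'.integrableOn htop]

lemma integral_sign_sub_smul_of_hasDerivAt_of_integrable [CompleteSpace E]
    (hderiv : ∀ t, HasDerivAt f (f' t) t) (hf' : Integrable f') (hf : Integrable f) (x : ℝ) :
    ∫ t, Real.sign (x - t) • f' t = (2 : ℝ) • f x := by
  have hbot : Tendsto f atBot (𝓝 0) :=
    tendsto_zero_of_hasDerivAt_of_integrableOn_Iic (a := x) (fun t _ ↦ hderiv t)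
      hf'.integrableOn hf.integrableOn
  have htop : Tendsto f atTop (𝓝 0) :=
    tendsto_zero_of_hasDerivAt_of_integrableOn_Ioi (a := x) (fun t _ ↦ hderiv t)
      hf'.integrableOn hf.integrableOn
  rw [integral_sign_sub_smul_of_hasDerivAt_of_tendsto hderiv hf' hbot htop, two_smul]
  abel

end SignIntegral

lemma integrable_exp_neg_mul_sq_mul_eval {b : ℝ} (hb : 0 < b) (P : ℝ[X]) :
    Integrable fun t : ℝ ↦ Real.exp (-b * t ^ 2) * P.eval t := by
  induction P using Polynomial.induction_on' with
  | add P Q hP hQ => simpa only [eval_add, mul_add] using hP.fun_add hQ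
  | monomial m c =>
    have hm : (-1 : ℝ) < m := neg_one_lt_zero.trans_le m.cast_nonneg
    have hpow : Integrable fun t : ℝ ↦ t ^ m * Real.exp (-b * t ^ 2) := by
      simpa only [Real.rpow_natCast] using integrable_rpow_mul_exp_neg_mul_sq hb hm
    simpa only [eval_monomial, mul_comm (Real.exp _), mul_assoc] using hpow.const_mul c

lemma hasDerivAt_exp_neg_sq_div_two (t : ℝ) :
    HasDerivAt (fun t : ℝ ↦ Real.exp (-t ^ 2 / 2)) (-t * Real.exp (-t ^ 2 / 2)) t := by
  have hquad : HasDerivAt (fun t : ℝ ↦ -t ^ 2 / 2) (-t) t :=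
    ((hasDerivAt_pow 2 t).neg.div_const 2).congr_deriv (by ring)
  simpa only [mul_comm] using hquad.exp

lemma hermiteP_zero : hermiteP 0 = fun _ ↦ 1 := by
  ext t
  simp [hermiteP, hermiteH]

lemma hermiteP_one : hermiteP 1 = id := by
  ext t
  simp [hermiteP, hermiteH]

lemma hermiteP_add_two (n : ℕ) (t : ℝ) :
    hermiteP (n + 2) t = t * hermiteP (n + 1) t - (n + 1) / 2 * hermiteP n t := by
  simp only [hermiteP, hermiteH]
  field

lemma exists_eval_eq_hermiteP (n : ℕ) : ∃ P : ℝ[X], ∀ t, P.eval t = hermiteP n t := by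
  induction n using Nat.twoStepInduction with
  | zero => exact ⟨1, by simp [hermiteP_zero]⟩
  | one => exact ⟨X, by simp [hermiteP_one]⟩
  | more n ih₀ ih₁ =>
    obtain ⟨P, hP⟩ := ih₀
    obtain ⟨Q, hQ⟩ := ih₁
    exact ⟨X * Q - C (((n : ℝ) + 1) / 2) * P, fun t ↦ by simp [hP, hQ, hermiteP_add_two]⟩

lemma hasDerivAt_hermiteP_succ (n : ℕ) (t : ℝ) :
    HasDerivAt (hermiteP (n + 1)) ((n + 1) * hermiteP n t) t := by
  have hrec (m : ℕ) : hermiteP (m + 2) =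
      id * hermiteP (m + 1) - fun s ↦ ((m : ℝ) + 1) / 2 * hermiteP m s :=
    funext (hermiteP_add_two m)
  induction n using Nat.twoStepInduction with
  | zero => simpa [hermiteP_zero, hermiteP_one] using hasDerivAt_id t
  | one =>
    rw [hrec]
    simp only [hermiteP_zero, zero_add, hermiteP_one]
    refine (((hasDerivAt_id t).mul (hasDerivAt_id t)).sub_const _).congr_deriv ?_
    rw [id, Nat.cast_one]
    ring
  | more n ih₀ ih₁ =>
    rw [hrec]
    refine (((hasDerivAt_id t).mul ih₁).sub (ih₀.const_mul _)).congr_deriv ?_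
    rw [hermiteP_add_two, id]
    push_cast
    ring

lemma integrable_exp_neg_sq_div_two_mul_hermiteP (n : ℕ) :
    Integrable fun t : ℝ ↦ Real.exp (-t ^ 2 / 2) * hermiteP n t := by
  obtain ⟨P, hP⟩ := exists_eval_eq_hermiteP n
  convert integrable_exp_neg_mul_sq_mul_eval one_half_pos P using 4 with t
  · ring
  · exact (hP t).symm

lemma hasDerivAt_exp_neg_sq_div_two_mul_hermiteP_succ (n : ℕ) (t : ℝ) :
    HasDerivAt (fun t ↦ Real.exp (-t ^ 2 / 2) * hermiteP (n + 1) t)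
      (((n : ℝ) + 1) / 2 * (Real.exp (-t ^ 2 / 2) * hermiteP n t)
        - Real.exp (-t ^ 2 / 2) * hermiteP (n + 2) t) t := by
  refine ((hasDerivAt_exp_neg_sq_div_two t).mul (hasDerivAt_hermiteP_succ n t)).congr_deriv ?_
  rw [hermiteP_add_two]
  ring

/-- The function `Φ_n(x) = (1/2) ∫ sgn(x - t) e^{-t²/2} p_n(t) dt` attached to the monic Hermite
polynomial `p_n`; it is the antiderivative of `e^{-x²/2} p_n(x)` with opposite limits at `±∞`. -/
noncomputable def hermitePhi (n : ℕ) (x : ℝ) : ℝ :=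
  (1 / 2) * ∫ t : ℝ, Real.sign (x - t) * Real.exp (-t ^ 2 / 2) * hermiteP n t

lemma mul_hermitePhi_sub_hermitePhi_add_two (n : ℕ) (x : ℝ) :
    ((n : ℝ) + 1) / 2 * hermitePhi n x - hermitePhi (n + 2) x
      = Real.exp (-x ^ 2 / 2) * hermiteP (n + 1) x := by
  let F (m : ℕ) (t : ℝ) : ℝ := Real.exp (-t ^ 2 / 2) * hermiteP m t
  have hF (m : ℕ) : Integrable (F m) := integrable_exp_neg_sq_div_two_mul_hermiteP m
  have hsF (m : ℕ) : Integrable fun t ↦ Real.sign (x - t) * F m t :=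
    integrable_sign_sub_smul (hF m) x
  calc ((n : ℝ) + 1) / 2 * hermitePhi n x - hermitePhi (n + 2) x
      = 1 / 2 * (((n : ℝ) + 1) / 2 * (∫ t, Real.sign (x - t) * F n t)
          - ∫ t, Real.sign (x - t) * F (n + 2) t) := by
        simp only [hermitePhi, F, mul_assoc]
        ring
    _ = 1 / 2 * ∫ t, Real.sign (x - t) * (((n : ℝ) + 1) / 2 * F n t - F (n + 2) t) := by
        rw [← integral_const_mul, ← integral_sub ((hsF n).const_mul _) (hsF (n + 2))]
        simp only [mul_sub, mul_left_comm (Real.sign _)]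
    _ = 1 / 2 * (2 * F (n + 1) x) :=
        congrArg _ <| integral_sign_sub_smul_of_hasDerivAt_of_integrable
          (hasDerivAt_exp_neg_sq_div_two_mul_hermiteP_succ n)
          (((hF n).const_mul _).sub (hF (n + 2))) (hF (n + 1)) x
    _ = F (n + 1) x := by ring

theorem hermite_Phi_identity_general (n : ℕ) (x : ℝ) :
    hermitePhi n x - (1 / ((n : ℝ) / 2 + 1 / 2)) * hermitePhi (n + 2) x
      = (1 / (2 ^ n * ((n : ℝ) + 1))) * Real.exp (-x ^ 2 / 2) * hermiteH (n + 1) x := by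
  calc hermitePhi n x - (1 / ((n : ℝ) / 2 + 1 / 2)) * hermitePhi (n + 2) x
      = 2 / ((n : ℝ) + 1) * (((n : ℝ) + 1) / 2 * hermitePhi n x - hermitePhi (n + 2) x) := by
        rw [← add_div]
        field
    _ = 2 / ((n : ℝ) + 1) * (Real.exp (-x ^ 2 / 2) * hermiteP (n + 1) x) := by
        rw [mul_hermitePhi_sub_hermitePhi_add_two]
    _ = (1 / (2 ^ n * ((n : ℝ) + 1))) * Real.exp (-x ^ 2 / 2) * hermiteH (n + 1) x := by
        rw [hermiteP]
        field

/-- The identity `Φ_{2k}(x) − (1/(k+1/2)) Φ_{2k+2}(x) = (2^{−2k}/(2k+1)) e^{−x²/2} H_{2k+1}(x)`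
for the monic Hermite polynomials. -/
theorem hermite_Phi_identity (k : ℕ) (x : ℝ) :
    (1 / 2) * (∫ t : ℝ, Real.sign (x - t) * Real.exp (-t ^ 2 / 2) * hermiteP (2 * k) t)
      - (1 / ((k : ℝ) + 1 / 2)) *
        ((1 / 2) * ∫ t : ℝ, Real.sign (x - t) * Real.exp (-t ^ 2 / 2) * hermiteP (2 * k + 2) t)
      = (1 / (2 ^ (2 * k) * (2 * (k : ℝ) + 1))) * Real.exp (-x ^ 2 / 2) *
          hermiteH (2 * k + 1) x := by
  simpa only [hermitePhi, Nat.cast_mul, Nat.cast_ofNat, mul_div_cancel_left₀ _ (two_ne_zero' ℝ)]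
    using hermite_Phi_identity_general (2 * k) x
end
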